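/- arXiv:2301.01401 — 4 statements merged into one kernel-verified Lean document; each statement's English description precedes it below -/
import Mathlib

section
/- Let m be a natural number and let (a_k), (b_k), (c_k), (d_k), (γ_k), (Δt_k), 0 ≤ k ≤ m+1, be nonnegative real numbers such that for all 0 ≤ k ≤ m one has a_{k+1} − a_k + b_{k+1}·Δt_{k+1} + c_{k+1}·Δt_{k+1} − c_k·Δt_k ≤ a_k·d_k·Δt_k + γ_{k+1}·Δt_{k+1}. Then a_{m+1} + Σ_{k=0}^{m+1} b_k·Δt_k ≤ exp(Σ_{k=0}^{m} d_k·Δt_k) · ( a_0 + (b_0 + c_0)·Δt_0 + Σ_{k=1}^{m+1} γ_k·Δt_k ). -/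
/-- Discrete Gronwall lemma with nonuniform time steps: if nonnegative sequences
`a, b, c, d, γ, Δt` satisfy
`a (k+1) - a k + b (k+1) * Δt (k+1) + c (k+1) * Δt (k+1) - c k * Δt k
  ≤ a k * d k * Δt k + γ (k+1) * Δt (k+1)` for all `k ≤ m`, then
`a (m+1) + ∑_{k=0}^{m+1} b k * Δt k
  ≤ exp (∑_{k=0}^{m} d k * Δt k) * (a 0 + (b 0 + c 0) * Δt 0 + ∑_{k=1}^{m+1} γ k * Δt k)`. -/
theorem discrete_gronwall_nonuniform
    (m : ℕ) (a b c d γ Δt : ℕ → ℝ)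
    (ha : ∀ k ≤ m + 1, 0 ≤ a k) (hb : ∀ k ≤ m + 1, 0 ≤ b k)
    (hc : ∀ k ≤ m + 1, 0 ≤ c k) (hd : ∀ k ≤ m + 1, 0 ≤ d k)
    (hγ : ∀ k ≤ m + 1, 0 ≤ γ k) (hΔt : ∀ k ≤ m + 1, 0 ≤ Δt k)
    (hrec : ∀ k ≤ m,
      a (k + 1) - a k + b (k + 1) * Δt (k + 1) + c (k + 1) * Δt (k + 1) - c k * Δt k
        ≤ a k * d k * Δt k + γ (k + 1) * Δt (k + 1)) :
    a (m + 1) + ∑ k ∈ Finset.range (m + 2), b k * Δt k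
      ≤ Real.exp (∑ k ∈ Finset.range (m + 1), d k * Δt k) *
          (a 0 + (b 0 + c 0) * Δt 0 + ∑ k ∈ Finset.Icc 1 (m + 1), γ k * Δt k) := by
  have key : ∀ n, n ≤ m + 1 →
      a n + ∑ k ∈ Finset.range (n + 1), b k * Δt k + c n * Δt n
        ≤ Real.exp (∑ k ∈ Finset.range n, d k * Δt k) *
          (a 0 + (b 0 + c 0) * Δt 0 + ∑ k ∈ Finset.Icc 1 n, γ k * Δt k) := by
    intro n
    induction n with
    | zero =>
      intro _
      simp
      linarith
    | succ n ih =>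
      intro hn
      have hn' : n ≤ m + 1 := by omega
      have ih := ih hn'
      have hr := hrec n (by omega)
      rw [Finset.sum_range_succ _ (n + 1), Finset.sum_range_succ (fun k => d k * Δt k) n,
        Finset.sum_Icc_succ_top (by omega : 1 ≤ n + 1), Real.exp_add]
      have hB : 0 ≤ ∑ k ∈ Finset.range (n + 1), b k * Δt k :=
        Finset.sum_nonneg fun k hk => by
          have := Finset.mem_range.mp hk
          exact mul_nonneg (hb k (by omega)) (hΔt k (by omega))
      have hD : 0 ≤ ∑ k ∈ Finset.range n, d k * Δt k :=
        Finset.sum_nonneg fun k hk => by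
          have := Finset.mem_range.mp hk
          exact mul_nonneg (hd k (by omega)) (hΔt k (by omega))
      have hE := Real.one_le_exp hD
      have hx : 0 ≤ d n * Δt n := mul_nonneg (hd n hn') (hΔt n hn')
      have hX := Real.add_one_le_exp (d n * Δt n)
      have hcn : 0 ≤ c n * Δt n := mul_nonneg (hc n hn') (hΔt n hn')
      have hg : 0 ≤ γ (n + 1) * Δt (n + 1) := mul_nonneg (hγ _ hn) (hΔt _ hn)
      have han := ha n hn'
      generalize (∑ k ∈ Finset.range (n + 1), b k * Δt k) = B at *
      generalize Real.exp (∑ k ∈ Finset.range n, d k * Δt k) = E at *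
      generalize (∑ k ∈ Finset.Icc 1 n, γ k * Δt k) = G at *
      have hX1 : 1 ≤ Real.exp (d n * Δt n) := by linarith
      generalize Real.exp (d n * Δt n) = X at *
      have h1 : (a n + B + c n * Δt n) * (d n * Δt n + 1) ≤ (a n + B + c n * Δt n) * X :=
        mul_le_mul_of_nonneg_left hX (by linarith)
      have h2 := mul_le_mul_of_nonneg_right ih (by linarith : (0:ℝ) ≤ X)
      have h3 : 1 ≤ E * X := one_le_mul_of_one_le_of_one_le hE hX1
      have h4 := mul_le_mul_of_nonneg_right h3 hg
      have h5 := mul_nonneg (add_nonneg hB hcn) hx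
      linarith
  have h := key (m + 1) le_rfl
  have := mul_nonneg (hc (m + 1) le_rfl) (hΔt (m + 1) le_rfl)
  linarith
end

section
/- Let F : [0,∞) → (0,∞) be continuous and increasing, let M > 0, and let T* be a real number with 0 < T* < ∫_M^∞ dx / F(x) (the improper integral, possibly +∞). Then there exists a constant C* > 0, depending only on F, M and T* (in particular independent of Δt), with the following property: for every Δt > 0, every natural number n* with n*·Δt ≤ T*, and all nonnegative real sequences (x_n) and (ω_n) satisfying x_n + Σ_{k=0}^{n−1} Δt·ω_k ≤ M + Σ_{k=0}^{n−1} Δt·F(x_k) for every n ≤ n*, one has M + Σ_{k=0}^{n*−1} Δt·F(x_k) ≤ C*. -/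
/-- Nonlinear discrete Gronwall-type lemma (local in time): if `F` is continuous,
increasing and positive on `[0, ∞)`, `M > 0` and `0 < T* < ∫_M^∞ dx / F(x)`
(improper integral, possibly `+∞`), then there is a constant `C*` independent of
`Δt` such that for every `Δt > 0` and `n*` with `n* Δt ≤ T*`, any nonnegative
sequences `x, ω` satisfying
`x n + ∑_{k<n} Δt ω k ≤ M + ∑_{k<n} Δt F (x k)` for all `n ≤ n*`
obey `M + ∑_{k < n*} Δt F (x k) ≤ C*`. -/
theorem nonlinear_discrete_gronwall_local
    (F : ℝ → ℝ) (M Tstar : ℝ)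
    (hF_pos : ∀ x, 0 ≤ x → 0 < F x)
    (hF_cont : ContinuousOn F (Set.Ici 0))
    (hF_mono : MonotoneOn F (Set.Ici 0))
    (hM : 0 < M) (hT_pos : 0 < Tstar)
    (hT : ENNReal.ofReal Tstar < ∫⁻ x in Set.Ioi M, ENNReal.ofReal (1 / F x)) :
    ∃ Cstar > 0, ∀ (Δt : ℝ) (nstar : ℕ) (x ω : ℕ → ℝ),
      0 < Δt → (nstar : ℝ) * Δt ≤ Tstar →
      (∀ n, 0 ≤ x n) → (∀ n, 0 ≤ ω n) →
      (∀ n ≤ nstar, x n + ∑ k ∈ Finset.range n, Δt * ω k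
          ≤ M + ∑ k ∈ Finset.range n, Δt * F (x k)) →
      M + ∑ k ∈ Finset.range nstar, Δt * F (x k) ≤ Cstar := by
  have hC : ∃ C : ℝ, ENNReal.ofReal Tstar
      < ∫⁻ x in Set.Ioc M C, ENNReal.ofReal (1 / F x) := by
    by_contra hcon
    push Not at hcon
    have hU : Set.Ioi M = ⋃ n : ℕ, Set.Ioc M (n : ℝ) := by
      ext z
      simp only [Set.mem_Ioi, Set.mem_iUnion, Set.mem_Ioc]
      constructor
      · intro hz
        obtain ⟨n, hn⟩ := exists_nat_ge z
        exact ⟨n, hz, hn⟩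
      · rintro ⟨n, hz, _⟩
        exact hz
    have hdir : Directed (· ⊆ ·) (fun n : ℕ => Set.Ioc M (n : ℝ)) := by
      apply Monotone.directed_le
      intro a b hab
      exact Set.Ioc_subset_Ioc_right (by exact_mod_cast hab)
    rw [hU, MeasureTheory.setLIntegral_iUnion_of_directed _ hdir] at hT
    exact absurd hT (not_lt.mpr (iSup_le fun n => hcon n))
  obtain ⟨C, hC⟩ := hC
  refine ⟨max C 1, by positivity, ?_⟩
  intro Δt nstar x ω hΔ hn hx hω h
  have key : ∀ n ≤ nstar, M ≤ M + ∑ k ∈ Finset.range n, Δt * F (x k) ∧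
      ∫⁻ z in Set.Ioc M (M + ∑ k ∈ Finset.range n, Δt * F (x k)),
        ENNReal.ofReal (1 / F z) ≤ ENNReal.ofReal (n * Δt) := by
    intro n
    induction n with
    | zero => intro _; simp
    | succ n ih =>
      intro hle
      obtain ⟨h1, h2⟩ := ih (by omega)
      have h3 := h n (by omega)
      have h4 : 0 ≤ ∑ k ∈ Finset.range n, Δt * ω k :=
        Finset.sum_nonneg fun k _ => mul_nonneg hΔ.le (hω k)
      rw [Finset.sum_range_succ, ← add_assoc]
      set y := M + ∑ k ∈ Finset.range n, Δt * F (x k) with hy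
      have hxy : x n ≤ y := by linarith
      have hy0 : 0 ≤ y := by linarith
      have hFx := hF_pos (x n) (hx n)
      have hFy := hF_pos y hy0
      have hFF : F (x n) ≤ F y := hF_mono (hx n) hy0 hxy
      have hpos : 0 < Δt * F (x n) := mul_pos hΔ hFx
      refine ⟨by linarith, ?_⟩
      have hs : ∫⁻ z in Set.Ioc y (y + Δt * F (x n)), ENNReal.ofReal (1 / F z)
          ≤ ENNReal.ofReal Δt := by
        calc ∫⁻ z in Set.Ioc y (y + Δt * F (x n)), ENNReal.ofReal (1 / F z)
            ≤ ∫⁻ _ in Set.Ioc y (y + Δt * F (x n)), ENNReal.ofReal (1 / F y) := by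
              apply MeasureTheory.setLIntegral_mono' measurableSet_Ioc
              intro z hz
              apply ENNReal.ofReal_le_ofReal
              apply one_div_le_one_div_of_le hFy
              exact hF_mono hy0 (hy0.trans hz.1.le) hz.1.le
          _ = ENNReal.ofReal (1 / F y * (Δt * F (x n))) := by
              rw [MeasureTheory.setLIntegral_const, Real.volume_Ioc,
                ENNReal.ofReal_mul (by positivity)]
              congr 2
              ring
          _ ≤ ENNReal.ofReal Δt := by
              apply ENNReal.ofReal_le_ofReal
              rw [one_div_mul_eq_div, div_le_iff₀ hFy]
              exact mul_le_mul_of_nonneg_left hFF hΔ.le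
      rw [← Set.Ioc_union_Ioc_eq_Ioc h1 (by linarith : y ≤ y + Δt * F (x n))]
      refine (MeasureTheory.lintegral_union_le _ _ _).trans ((add_le_add h2 hs).trans ?_)
      rw [← ENNReal.ofReal_add (by positivity) hΔ.le]
      apply ENNReal.ofReal_le_ofReal
      push_cast
      linarith
  obtain ⟨_, h2⟩ := key nstar le_rfl
  by_contra hcon
  have hCy : C ≤ M + ∑ k ∈ Finset.range nstar, Δt * F (x k) :=
    (le_max_left C 1).trans (not_le.mp hcon).le
  have hsub : Set.Ioc M C ⊆ Set.Ioc M (M + ∑ k ∈ Finset.range nstar, Δt * F (x k)) :=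
    Set.Ioc_subset_Ioc_right hCy
  have h5 := MeasureTheory.lintegral_mono_set (μ := MeasureTheory.volume)
    (f := fun z => ENNReal.ofReal (1 / F z)) hsub
  exact absurd hC (not_lt.mpr (h5.trans (h2.trans (ENNReal.ofReal_le_ofReal hn))))
end

section
/- Let M > 0 and let T* be a real number with 0 < T* < 1/(5 M^5) (note that ∫_M^∞ dx/x^6 = 1/(5 M^5)). Then there exists a constant C* > 0, depending only on M and T* and independent of Δt, with the following property: for every Δt > 0, every natural number n* with n*·Δt ≤ T*, and all nonnegative real sequences (x_n) and (ω_n) satisfying x_n + Σ_{k=0}^{n−1} Δt·ω_k ≤ M + Σ_{k=0}^{n−1} Δt·x_k^6 for every n ≤ n*, one has M + Σ_{k=0}^{n*−1} Δt·x_k^6 ≤ C*, and in particular x_n ≤ C* for all n ≤ n*. -/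
theorem gronwall_step (S S' D : ℝ) (hS : 0 < S) (hS' : 0 < S') (hD : 0 < D)
    (h : S' ≤ S + D * S ^ 6) : 1 / S ^ 5 - 5 * D ≤ 1 / S' ^ 5 := by
  have h1 : 1 / (S + D * S ^ 6) ^ 5 ≤ 1 / S' ^ 5 := by
    apply one_div_le_one_div_of_le (by positivity)
    gcongr
  refine le_trans ?_ h1
  have hu : 0 < D * S ^ 5 := by positivity
  have e1 : 1 / S ^ 5 - 5 * D = (1 - 5 * (D * S ^ 5)) / S ^ 5 := by
    field_simp
  have e2 : S + D * S ^ 6 = S * (1 + D * S ^ 5) := by ring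
  rw [e1, e2, mul_pow]
  generalize D * S ^ 5 = u at hu
  have key : (1 - 5 * u) * (1 + u) ^ 5 ≤ 1 := by
    have : 0 ≤ 15 * u ^ 2 + 40 * u ^ 3 + 45 * u ^ 4 + 24 * u ^ 5 + 5 * u ^ 6 := by positivity
    nlinarith [this]
  rw [div_le_div_iff₀ (by positivity) (by positivity)]
  have : 0 < S ^ 5 := by positivity
  nlinarith [mul_le_mul_of_nonneg_left key this.le]

/-- The instance `F x = x^6` of the nonlinear discrete Gronwall lemma: if `M > 0` and
`0 < T* < 1/(5 M^5) = ∫_M^∞ dx/x^6`, then there is a constant `C*` independent of `Δt`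
such that for every `Δt > 0` and `n*` with `n* Δt ≤ T*`, any nonnegative sequences
`x, ω` satisfying `x n + ∑_{k<n} Δt ω k ≤ M + ∑_{k<n} Δt (x k)^6` for all `n ≤ n*`
obey `M + ∑_{k < n*} Δt (x k)^6 ≤ C*`, and in particular `x n ≤ C*` for all `n ≤ n*`. -/
theorem nonlinear_discrete_gronwall_pow_six
    (M Tstar : ℝ) (hM : 0 < M) (hT_pos : 0 < Tstar)
    (hT : Tstar < 1 / (5 * M ^ 5)) :
    ∃ Cstar > 0, ∀ (Δt : ℝ) (nstar : ℕ) (x ω : ℕ → ℝ),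
      0 < Δt → (nstar : ℝ) * Δt ≤ Tstar →
      (∀ n, 0 ≤ x n) → (∀ n, 0 ≤ ω n) →
      (∀ n ≤ nstar, x n + ∑ k ∈ Finset.range n, Δt * ω k
          ≤ M + ∑ k ∈ Finset.range n, Δt * x k ^ 6) →
      (M + ∑ k ∈ Finset.range nstar, Δt * x k ^ 6 ≤ Cstar) ∧
        ∀ n ≤ nstar, x n ≤ Cstar := by
  have hd : 0 < 1 / M ^ 5 - 5 * Tstar := by
    have : 1 / (5 * M ^ 5) = (1 / M ^ 5) / 5 := by field_simp
    rw [this] at hT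
    linarith
  set d := 1 / M ^ 5 - 5 * Tstar with hd_def
  refine ⟨1 + 1 / d, by positivity, ?_⟩
  intro Δt nstar x ω hΔ hn hx hω h
  have hSpos : ∀ n, 0 < M + ∑ k ∈ Finset.range n, Δt * x k ^ 6 := fun n =>
    add_pos_of_pos_of_nonneg hM (Finset.sum_nonneg fun k _ =>
      mul_nonneg hΔ.le (pow_nonneg (hx k) 6))
  have hxS : ∀ n ≤ nstar, x n ≤ M + ∑ k ∈ Finset.range n, Δt * x k ^ 6 := fun n hn => by
    have h1 := h n hn
    have h2 : 0 ≤ ∑ k ∈ Finset.range n, Δt * ω k :=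
      Finset.sum_nonneg fun k _ => mul_nonneg hΔ.le (hω k)
    linarith
  have main : ∀ n ≤ nstar, 1 / M ^ 5 - 5 * (n * Δt)
      ≤ 1 / (M + ∑ k ∈ Finset.range n, Δt * x k ^ 6) ^ 5 := by
    intro n
    induction n with
    | zero => simp
    | succ n ih =>
      intro hn'
      have i1 := ih (by omega)
      have i2 := gronwall_step _ (M + ∑ k ∈ Finset.range (n + 1), Δt * x k ^ 6) Δt
        (hSpos n) (hSpos _) hΔ (by
          rw [Finset.sum_range_succ, ← add_assoc]
          have := pow_le_pow_left₀ (hx n) (hxS n (by omega)) 6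
          have := mul_le_mul_of_nonneg_left this hΔ.le
          linarith)
      push_cast
      linarith
  have bound : ∀ n ≤ nstar, M + ∑ k ∈ Finset.range n, Δt * x k ^ 6 ≤ 1 + 1 / d := by
    intro n hnn
    have m := main n hnn
    have hS := hSpos n
    have hc : (n : ℝ) * Δt ≤ nstar * Δt := by gcongr
    generalize M + ∑ k ∈ Finset.range n, Δt * x k ^ 6 = S at m hS
    have hdS : d ≤ 1 / S ^ 5 := by linarith
    have h5 : S ^ 5 ≤ 1 / d := by
      rw [le_div_iff₀ (by positivity)] at hdS ⊢
      linarith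
    by_contra! hc2
    have hd' : 0 < 1 / d := by positivity
    have : S ≤ S ^ 5 := le_self_pow₀ (by linarith) (by norm_num)
    linarith
  exact ⟨bound nstar le_rfl, fun n hn => (hxS n hn).trans (bound n hn)⟩
end

section
/- Let H be a real Hilbert space, let a < b be real numbers with Δt = b − a, and let u : ℝ → H be twice continuously differentiable on an open interval containing [a, b]. Then the truncation error S := u'(b) − (u(b) − u(a))/(b − a) satisfies ‖S‖² ≤ (Δt/3) ∫_a^b ‖u''(t)‖² dt. -/
/-- Bound for the first-order backward-difference truncation error
`S = u'(b) - (u(b) - u(a))/(b - a)` of a Hilbert-space-valued function `u` that is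
`C²` on an open set containing `[a, b]`, with `Δt = b - a`:
`‖S‖² ≤ (Δt/3) ∫_a^b ‖u''(t)‖² dt`. -/
theorem truncation_error_sq_bound
    {H : Type*} [NormedAddCommGroup H] [InnerProductSpace ℝ H] [CompleteSpace H]
    (u : ℝ → H) (a b : ℝ) (hab : a < b)
    (s : Set ℝ) (hs : IsOpen s) (hsub : Set.Icc a b ⊆ s)
    (hu : ContDiffOn ℝ 2 u s) :
    ‖deriv u b - (b - a)⁻¹ • (u b - u a)‖ ^ 2
      ≤ ((b - a) / 3) * ∫ t in a..b, ‖deriv (deriv u) t‖ ^ 2 := by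
  have hd1 : ContDiffOn ℝ 1 (deriv u) s := by
    have h := (contDiffOn_succ_iff_deriv_of_isOpen (n := 1) hs).1 (by norm_num; exact hu)
    exact h.2.2
  have hd2 : ContinuousOn (deriv (deriv u)) s :=
    hd1.continuousOn_deriv_of_isOpen hs le_rfl
  have h1 : ∀ t ∈ s, HasDerivAt u (deriv u t) t := fun t ht =>
    ((hu.differentiableOn (by norm_num)).differentiableAt (hs.mem_nhds ht)).hasDerivAt
  have h2 : ∀ t ∈ s, HasDerivAt (deriv u) (deriv (deriv u) t) t := fun t ht =>
    ((hd1.differentiableOn (by norm_num)).differentiableAt (hs.mem_nhds ht)).hasDerivAt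
  have hD : 0 < b - a := sub_pos.2 hab
  have hc2 : ContinuousOn (deriv (deriv u)) (Set.Icc a b) := hd2.mono hsub
  generalize hS : deriv u b - (b - a)⁻¹ • (u b - u a) = S
  obtain ⟨c, hc⟩ : ∃ c : ℝ, c = 3 / (b - a) ^ 2 := ⟨_, rfl⟩
  let G : ℝ → ℝ := fun t =>
    2 * c * inner ℝ S ((t - a) • deriv u t - u t) - c ^ 2 * ‖S‖ ^ 2 * ((t - a) ^ 3 / 3)
  let g : ℝ → ℝ := fun t =>
    2 * c * inner ℝ S ((t - a) • deriv (deriv u) t) - c ^ 2 * ‖S‖ ^ 2 * (t - a) ^ 2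
  have hG : ∀ t ∈ Set.uIcc a b, HasDerivAt G (g t) t := by
    intro t ht
    rw [Set.uIcc_of_le hab.le] at ht
    have hl : HasDerivAt (fun t : ℝ => t - a) 1 t := (hasDerivAt_id t).sub_const a
    have hF : HasDerivAt (fun t => (t - a) • deriv u t - u t)
        ((t - a) • deriv (deriv u) t) t := by
      have := (hl.smul (h2 t (hsub ht))).sub (h1 t (hsub ht))
      refine this.congr_deriv ?_
      simp
    have hI := ((hasDerivAt_const t S).inner ℝ hF).const_mul (2 * c)
    have hP := ((hl.pow 3).div_const 3).const_mul (c ^ 2 * ‖S‖ ^ 2)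
    refine (hI.sub hP).congr_deriv ?_
    simp only [g, inner_zero_left, add_zero]
    push_cast
    ring
  have hgc : ContinuousOn g (Set.Icc a b) := by
    have hl : ContinuousOn (fun t : ℝ => t - a) (Set.Icc a b) := by fun_prop
    have := (continuousOn_const (c := S)).inner (𝕜 := ℝ) (hl.smul hc2)
    exact (continuousOn_const.mul this).sub (continuousOn_const.mul (hl.pow 2))
  have hgi : IntervalIntegrable g MeasureTheory.volume a b :=
    hgc.intervalIntegrable_of_Icc hab.le
  have hwi : IntervalIntegrable (fun t => ‖deriv (deriv u) t‖ ^ 2)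
      MeasureTheory.volume a b :=
    (hc2.norm.pow 2).intervalIntegrable_of_Icc hab.le
  have hint := intervalIntegral.integral_eq_sub_of_hasDerivAt hG hgi
  have hmono : ∫ t in a..b, g t ≤ ∫ t in a..b, ‖deriv (deriv u) t‖ ^ 2 := by
    refine intervalIntegral.integral_mono_on hab.le hgi hwi fun t _ => ?_
    have h := norm_sub_sq_real (deriv (deriv u) t) ((c * (t - a)) • S)
    have h0 := sq_nonneg ‖deriv (deriv u) t - (c * (t - a)) • S‖
    rw [norm_smul, mul_pow, Real.norm_eq_abs, sq_abs, real_inner_smul_right,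
      real_inner_comm] at h
    simp only [g, real_inner_smul_right]
    nlinarith
  have hval : G b - G a = 3 / (b - a) * ‖S‖ ^ 2 := by
    have hv : (b - a) • deriv u b - u b - ((a - a) • deriv u a - u a) = (b - a) • S := by
      rw [← hS, smul_sub, smul_inv_smul₀ hD.ne', sub_self, zero_smul]
      abel
    have hi : inner ℝ S ((b - a) • deriv u b - u b)
        - inner ℝ S ((a - a) • deriv u a - u a) = (b - a) * ‖S‖ ^ 2 := by
      rw [← inner_sub_right, hv, real_inner_smul_right, real_inner_self_eq_norm_sq]
    have : G b - G a = 2 * c * ((b - a) * ‖S‖ ^ 2)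
        - c ^ 2 * ‖S‖ ^ 2 * ((b - a) ^ 3 / 3) := by
      rw [← hi]; simp only [G]; ring
    rw [this, hc]
    have := hD.ne'
    field_simp
    ring
  rw [hint, hval] at hmono
  calc ‖S‖ ^ 2 = (b - a) / 3 * (3 / (b - a) * ‖S‖ ^ 2) := by
        have := hD.ne'
        field_simp
    _ ≤ _ := by gcongr
end
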